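/- For n = 2: for all i,j ∈ {1,2}, Res_{s=0} Σ'_{k∈ℤ²} k_i k_j / |k|^{s+4} = δ_{ij} π. For n = 4: for all i,j ∈ {1,…,4}, Res_{s=0} Σ'_{k∈ℤ⁴} k_i k_j / |k|^{s+6} = δ_{ij} π²/2, and for all i,j,l,m ∈ {1,…,4}, Res_{s=0} Σ'_{k∈ℤ⁴} k_i k_j k_l k_m / |k|^{s+8} = (δ_{ij}δ_{lm} + δ_{il}δ_{jm} + δ_{im}δ_{jl}) π²/12. In each case the series converges for Re(s) > 0 and the residue is taken of its meromorphic continuation at s = 0. -/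

import Mathlib

open Filter Topology

noncomputable section

/-- Euclidean norm of an integer vector `k ∈ ℤⁿ`. -/
def znorm {n : ℕ} (k : Fin n → ℤ) : ℝ := Real.sqrt (∑ i, ((k i : ℝ)) ^ 2)

/-! For a monomial `x^d` on `ℝⁿ`, the theta series `t^(|d|/2) ∑ k^d exp(-π|k|²t)` over `ℤⁿ` is a
product of one-dimensional series `∑ h(m√t)` with `h(x) = x^a exp(-πx²)`, so Poisson summation gives
it a functional equation of weight `n/2` relating it to the Fourier transforms of these `h`. As
`x^d` vanishes at the origin when `d ≠ 0`, its Mellin transform continues `∑' k^d / |k|^(s+n+|d|)`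
with only the pole at `s = 0`, whose residue is `2 ∫ x^d exp(-π|x|²) dx / Γ_ℝ(n + |d|)`.
Wick's formula for the Gaussian moments produces the Kronecker deltas. -/

section

open Set Asymptotics SchwartzMap FourierTransform Real Polynomial

section Norm

variable {n : ℕ}

lemma znorm_eq_norm (k : Fin n → ℤ) : znorm k = ‖WithLp.toLp 2 (fun i ↦ (k i : ℝ))‖ := by
  simp [znorm, EuclideanSpace.norm_eq]

lemma znorm_nonneg (k : Fin n → ℤ) : 0 ≤ znorm k := Real.sqrt_nonneg _

lemma znorm_sq (k : Fin n → ℤ) : znorm k ^ 2 = ∑ i, (k i : ℝ) ^ 2 :=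
  Real.sq_sqrt (by positivity)

lemma abs_le_znorm (k : Fin n → ℤ) (i : Fin n) : |(k i : ℝ)| ≤ znorm k := by
  rw [znorm_eq_norm]
  exact PiLp.norm_apply_le (WithLp.toLp 2 (fun i ↦ (k i : ℝ))) i

lemma znorm_eq_zero {k : Fin n → ℤ} : znorm k = 0 ↔ k = 0 := by
  rw [znorm_eq_norm, norm_eq_zero, WithLp.toLp_eq_zero]
  simp [funext_iff]

lemma summable_znorm_rpow {r : ℝ} (hr : r < -n) :
    Summable fun k : Fin n → ℤ ↦ znorm k ^ r := by
  let b := (EuclideanSpace.basisFun (Fin n) ℝ).toBasis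
  let L := Submodule.span ℤ (Set.range b)
  have hL : Module.finrank ℤ L = n := by
    rw [ZLattice.rank ℝ L, finrank_euclideanSpace_fin]
  have hb (k : Fin n → ℤ) : ∑ i, k i • b i = WithLp.toLp 2 (fun i ↦ (k i : ℝ)) := by
    ext i
    simp [b, Pi.single_apply, Finset.sum_apply]
  let ι (k : Fin n → ℤ) : L := ⟨∑ i, k i • b i,
    Submodule.sum_mem _ fun i _ ↦ Submodule.smul_mem _ _ (Submodule.subset_span ⟨i, rfl⟩)⟩
  have hι : Function.Injective ι := fun k l h ↦ by
    have := congrArg Subtype.val h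
    simpa [ι, hb, funext_iff] using this
  refine ((ZLattice.summable_norm_rpow L r (by rwa [hL])).comp_injective hι).congr fun k ↦ ?_
  simp [ι, hb, znorm_eq_norm]

end Norm

/-- `F` tends to `c` at infinity faster than every power. -/
def RapidlyTendsto (F : ℝ → ℂ) (c : ℂ) : Prop :=
  ∀ r : ℝ, (fun t ↦ F t - c) =O[atTop] (fun t ↦ t ^ r)

lemma RapidlyTendsto.mul {F G : ℝ → ℂ} {a b : ℂ} (hF : RapidlyTendsto F a)
    (hG : RapidlyTendsto G b) : RapidlyTendsto (fun t ↦ F t * G t) (a * b) := fun r ↦ by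
  have hG_zero := hG 0
  simp only [Real.rpow_zero] at hG_zero
  have hG_bounded : G =O[atTop] fun _ ↦ (1 : ℝ) := by
    simpa using hG_zero.add (isBigO_const_const b one_ne_zero atTop)
  have hFG := (hF r).mul hG_bounded
  simp only [mul_one] at hFG
  exact (hFG.add ((hG r).const_mul_left a)).congr_left fun t ↦ by ring

lemma RapidlyTendsto.prod {ι : Type*} {F : ι → ℝ → ℂ} {c : ι → ℂ} (s : Finset ι)
    (h : ∀ i ∈ s, RapidlyTendsto (F i) (c i)) :
    RapidlyTendsto (fun t ↦ ∏ i ∈ s, F i t) (∏ i ∈ s, c i) := by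
  classical
  induction s using Finset.induction_on with
  | empty => intro r; simpa using isBigO_zero _ _
  | insert i s hi ih =>
    simp only [Finset.prod_insert hi]
    exact (h i (by simp)).mul (ih fun j hj ↦ h j (by simp [hj]))

lemma hasSum_prod_pi {n : ℕ} {ι : Type*} {f : Fin n → ι → ℂ} {a : Fin n → ℂ}
    (h : ∀ i, HasSum (f i) (a i)) :
    HasSum (fun k : Fin n → ι ↦ ∏ i, f i (k i)) (∏ i, a i) := by
  induction n with
  | zero => simp
  | succ n ih =>
    have hsum := summable_mul_of_summable_norm (h 0).summable.norm
      (ih fun i ↦ h i.succ).summable.norm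
    have hprod := (h 0).mul (ih fun i ↦ h i.succ) hsum
    rw [Fin.prod_univ_succ, ← (Fin.consEquiv fun _ ↦ ι).hasSum_iff]
    simpa [Function.comp_def, Fin.prod_univ_succ, Fin.consEquiv] using hprod

/-- The theta-type series `∑ₘ h(m√t)` attached to a Schwartz function `h` on the line. -/
def schwartzTheta (h : 𝓢(ℝ, ℂ)) (t : ℝ) : ℂ := ∑' m : ℤ, h (m * √t)

section Theta

variable (h : 𝓢(ℝ, ℂ))

lemma norm_schwartz_int_mul_sqrt_le (N : ℕ) {t : ℝ} (ht : 0 < t) {m : ℤ} (hm : m ≠ 0) :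
    ‖h (m * √t)‖ ≤ SchwartzMap.seminorm ℂ N 0 h * (√t ^ N)⁻¹ * (|(m : ℝ)| ^ N)⁻¹ := by
  have hsqrt : 0 < √t := Real.sqrt_pos.2 ht
  have hdecay := SchwartzMap.norm_pow_mul_le_seminorm ℂ h N (m * √t)
  rw [norm_mul, Real.norm_eq_abs, Real.norm_of_nonneg hsqrt.le, mul_pow] at hdecay
  rw [← div_eq_mul_inv, ← div_eq_mul_inv, div_div, le_div_iff₀ (by positivity)]
  linarith

lemma summable_abs_int_pow_inv {N : ℕ} (hN : 1 < N) : Summable fun m : ℤ ↦ (|(m : ℝ)| ^ N)⁻¹ := by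
  simpa using (Real.summable_one_div_int_pow.2 hN).abs

lemma summable_schwartz_int_mul_sqrt {t : ℝ} (ht : 0 < t) : Summable fun m : ℤ ↦ h (m * √t) :=
  ((summable_abs_int_pow_inv one_lt_two).mul_left _).of_norm_bounded_eventually <|
    (eventually_cofinite_ne 0).mono fun _ ↦ norm_schwartz_int_mul_sqrt_le h 2 ht

lemma schwartzTheta_eq_add_tsum {t : ℝ} (ht : 0 < t) :
    schwartzTheta h t = h 0 + ∑' m : ℤ, if m = 0 then 0 else h (m * √t) := by
  rw [schwartzTheta, (summable_schwartz_int_mul_sqrt h ht).tsum_eq_add_tsum_ite 0]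
  simp

lemma norm_ite_schwartz_le (N : ℕ) {t : ℝ} (ht : 0 < t) (m : ℤ) :
    ‖if m = 0 then 0 else h (m * √t)‖ ≤
      SchwartzMap.seminorm ℂ N 0 h * (√t ^ N)⁻¹ * (|(m : ℝ)| ^ N)⁻¹ := by
  split_ifs with hm
  · rw [norm_zero]; positivity
  · exact norm_schwartz_int_mul_sqrt_le h N ht hm

lemma continuousOn_schwartzTheta : ContinuousOn (schwartzTheta h) (Ioi 0) := by
  intro t ht
  have hε : 0 < t / 2 := half_pos ht
  have hcont : ContinuousOn (fun u ↦ ∑' m : ℤ, if m = 0 then 0 else h (m * √u)) (Ioi (t / 2)) := by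
    refine continuousOn_tsum (fun m ↦ Continuous.continuousOn ?_)
      ((summable_abs_int_pow_inv one_lt_two).mul_left
        (SchwartzMap.seminorm ℂ 2 0 h * (√(t / 2) ^ 2)⁻¹)) fun m u hu ↦ ?_
    · split_ifs
      · exact continuous_const
      · exact h.continuous.comp (by fun_prop)
    · refine (norm_ite_schwartz_le h 2 (hε.trans hu) m).trans ?_
      have : √(t / 2) ≤ √u := Real.sqrt_le_sqrt (le_of_lt hu)
      gcongr
  have hnhds : Ioi (t / 2) ∈ 𝓝 t := Ioi_mem_nhds (half_lt_self ht)
  refine ContinuousAt.continuousWithinAt ?_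
  refine ((hcont.continuousAt hnhds).const_add (h 0)).congr ?_
  filter_upwards [hnhds] with u hu using (schwartzTheta_eq_add_tsum h (hε.trans hu)).symm

lemma rapidlyTendsto_schwartzTheta : RapidlyTendsto (schwartzTheta h) (h 0) := fun r ↦ by
  obtain ⟨N, hN⟩ := exists_nat_gt (max 1 (-2 * r))
  have hN_one : 1 < N := by exact_mod_cast (le_max_left _ _).trans_lt hN
  have hN_r : -2 * r < N := (le_max_right _ _).trans_lt hN
  set S := ∑' m : ℤ, (|(m : ℝ)| ^ N)⁻¹
  refine IsBigO.of_bound (SchwartzMap.seminorm ℂ N 0 h * S) ?_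
  filter_upwards [eventually_ge_atTop 1] with t ht
  have ht_pos : 0 < t := one_pos.trans_le ht
  have hpow : (√t ^ N)⁻¹ ≤ t ^ r := by
    rw [Real.sqrt_eq_rpow, ← Real.rpow_natCast, ← Real.rpow_mul ht_pos.le,
      ← Real.rpow_neg ht_pos.le]
    exact Real.rpow_le_rpow_of_exponent_le ht (by linarith)
  rw [schwartzTheta_eq_add_tsum h ht_pos, add_sub_cancel_left, Real.norm_of_nonneg (by positivity)]
  calc ‖∑' m : ℤ, if m = 0 then 0 else h (m * √t)‖
      ≤ SchwartzMap.seminorm ℂ N 0 h * (√t ^ N)⁻¹ * S :=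
        tsum_of_norm_bounded ((summable_abs_int_pow_inv hN_one).hasSum.mul_left _)
          (norm_ite_schwartz_le h N ht_pos)
    _ ≤ SchwartzMap.seminorm ℂ N 0 h * t ^ r * S := by gcongr
    _ = SchwartzMap.seminorm ℂ N 0 h * S * t ^ r := by ring

lemma fourier_comp_mul_inv {E : Type*} [NormedAddCommGroup E] [NormedSpace ℂ E] (f : ℝ → E)
    {c : ℝ} (hc : c ≠ 0) (w : ℝ) :
    𝓕 (fun x ↦ f (x * c⁻¹)) w = |c| • 𝓕 f (w * c) := by
  have hsub :=
    MeasureTheory.Measure.integral_comp_mul_right (fun x ↦ 𝐞 (-(x * (w * c))) • f x) c⁻¹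
  simp only [Real.fourier_real_eq]
  rw [inv_inv] at hsub
  rw [← hsub]
  congr! 5 with x
  field_simp

lemma schwartzTheta_one_div {t : ℝ} (ht : 0 < t) :
    schwartzTheta h (1 / t) = √t * schwartzTheta (𝓕 h) t := by
  have hsqrt : 0 < √t := Real.sqrt_pos.2 ht
  let dilation := ContinuousLinearEquiv.unitsEquivAut ℝ (Units.mk0 (√t)⁻¹ (by positivity))
  let hscaled := SchwartzMap.compCLMOfContinuousLinearEquiv ℂ dilation h
  have hF (w : ℝ) : 𝓕 hscaled w = √t * 𝓕 h (w * √t) := by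
    have := fourier_comp_mul_inv h hsqrt.ne' w
    rw [abs_of_pos hsqrt] at this
    exact this
  simpa [hscaled, dilation, schwartzTheta, hF, tsum_mul_left] using
    SchwartzMap.tsum_eq_tsum_fourier hscaled 0

end Theta

section ThetaPair

variable {n : ℕ}

/-- The functional equation relating `∏ᵢ ∑ₘ hᵢ(m√t)` to the same product for the Fourier
transforms `𝓕 hᵢ`, of weight `n / 2`. -/
def schwartzThetaPair (hn : 0 < n) (h : Fin n → 𝓢(ℝ, ℂ)) : WeakFEPair ℂ where
  f t := ∏ i, schwartzTheta (h i) t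
  g t := ∏ i, schwartzTheta (𝓕 (h i)) t
  k := n / 2
  ε := 1
  f₀ := ∏ i, h i 0
  g₀ := ∏ i, 𝓕 (h i) 0
  hf_int := (continuousOn_finsetProd _ fun i _ ↦
    continuousOn_schwartzTheta (h i)).locallyIntegrableOn measurableSet_Ioi
  hg_int := (continuousOn_finsetProd _ fun i _ ↦
    continuousOn_schwartzTheta (𝓕 (h i))).locallyIntegrableOn measurableSet_Ioi
  hk := by positivity
  hε := one_ne_zero
  h_feq t ht := by
    have hpow : ((t ^ ((n : ℝ) / 2) : ℝ) : ℂ) = (√t : ℂ) ^ n := by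
      rw [Real.sqrt_eq_rpow, ← Complex.ofReal_pow, ← Real.rpow_mul_natCast (le_of_lt ht),
        one_div_mul_eq_div]
    simp only [schwartzTheta_one_div _ ht, Finset.prod_mul_distrib, Finset.prod_const,
      Finset.card_univ, Fintype.card_fin, hpow, one_mul, smul_eq_mul]
  hf_top := RapidlyTendsto.prod _ fun i _ ↦ rapidlyTendsto_schwartzTheta (h i)
  hg_top := RapidlyTendsto.prod _ fun i _ ↦ rapidlyTendsto_schwartzTheta (𝓕 (h i))

lemma hasSum_schwartzThetaPair (hn : 0 < n) (h : Fin n → 𝓢(ℝ, ℂ)) {t : ℝ} (ht : 0 < t) :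
    HasSum (fun k : Fin n → ℤ ↦ ∏ i, h i (k i * √t)) ((schwartzThetaPair hn h).f t) :=
  hasSum_prod_pi (f := fun i (m : ℤ) ↦ h i (m * √t)) fun i ↦
    (summable_schwartz_int_mul_sqrt (h i) ht).hasSum

end ThetaPair

section Gaussian

lemma hasDerivAt_eval_mul_gaussian (p : ℂ[X]) (x : ℝ) :
    HasDerivAt (fun x : ℝ ↦ p.eval (x : ℂ) * Complex.exp (-π * x ^ 2))
      ((derivative p - C (2 * π : ℂ) * X * p).eval (x : ℂ) * Complex.exp (-π * x ^ 2)) x := by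
  have hp : HasDerivAt (fun x : ℝ ↦ p.eval (x : ℂ)) ((derivative p).eval (x : ℂ)) x :=
    (p.hasDerivAt (x : ℂ)).comp_ofReal
  have hg : HasDerivAt (fun x : ℝ ↦ Complex.exp (-π * x ^ 2))
      (Complex.exp (-π * x ^ 2) * (-π * (2 * x))) x := by
    simpa using ((((hasDerivAt_id (x : ℂ)).pow 2).const_mul (-π : ℂ)).cexp).comp_ofReal
  convert! hp.mul hg using 1
  simp only [eval_sub, eval_mul, eval_C, eval_X]
  ring

lemma exists_iteratedDeriv_eval_mul_gaussian (p : ℂ[X]) (n : ℕ) :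
    ∃ q : ℂ[X], iteratedDeriv n (fun x : ℝ ↦ p.eval (x : ℂ) * Complex.exp (-π * x ^ 2)) =
      fun x : ℝ ↦ q.eval (x : ℂ) * Complex.exp (-π * x ^ 2) := by
  induction n with
  | zero => exact ⟨p, iteratedDeriv_zero⟩
  | succ n ih =>
    obtain ⟨q, hq⟩ := ih
    refine ⟨derivative q - C (2 * π : ℂ) * X * q, ?_⟩
    rw [iteratedDeriv_succ, hq]
    exact funext fun x ↦ (hasDerivAt_eval_mul_gaussian q x).deriv

lemma tendsto_eval_mul_gaussian_cocompact (p : ℂ[X]) :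
    Tendsto (fun x : ℝ ↦ p.eval (x : ℂ) * Complex.exp (-π * x ^ 2)) (cocompact ℝ) (𝓝 0) := by
  induction p using Polynomial.induction_on' with
  | add p q hp hq => simpa [add_mul] using hp.add hq
  | monomial a c =>
    have hlim : Tendsto (fun x : ℝ ↦ ‖c‖ * (|x| ^ (a : ℝ) * Real.exp (-π * x ^ 2))) (cocompact ℝ)
        (𝓝 0) := by
      simpa using (tendsto_rpow_abs_mul_exp_neg_mul_sq_cocompact Real.pi_pos a).const_mul ‖c‖
    refine squeeze_zero_norm (fun x ↦ le_of_eq ?_) hlim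
    have hexp : ‖Complex.exp (-π * x ^ 2)‖ = Real.exp (-π * x ^ 2) := by
      rw [Complex.norm_exp]; norm_cast
    rw [eval_monomial, norm_mul, norm_mul, hexp, norm_pow, Complex.norm_real, Real.norm_eq_abs,
      Real.rpow_natCast, mul_assoc]

lemma exists_norm_eval_mul_gaussian_le (p : ℂ[X]) :
    ∃ C, ∀ x : ℝ, ‖p.eval (x : ℂ) * Complex.exp (-π * x ^ 2)‖ ≤ C := by
  let f : ZeroAtInftyContinuousMap ℝ ℂ :=
    ⟨⟨fun x : ℝ ↦ p.eval (x : ℂ) * Complex.exp (-π * x ^ 2), by fun_prop⟩,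
      tendsto_eval_mul_gaussian_cocompact p⟩
  obtain ⟨C, hC⟩ := f.isBounded_range.exists_norm_le
  exact ⟨C, fun x ↦ hC _ ⟨x, rfl⟩⟩

/-- The Schwartz function `x ↦ p(x) exp(-πx²)`. -/
def polyGaussian (p : ℂ[X]) : 𝓢(ℝ, ℂ) where
  toFun x := p.eval (x : ℂ) * Complex.exp (-π * x ^ 2)
  smooth' := contDiff_of_differentiable_iteratedDeriv fun n _ ↦ by
    obtain ⟨q, hq⟩ := exists_iteratedDeriv_eval_mul_gaussian p n
    rw [hq]
    exact fun x ↦ (hasDerivAt_eval_mul_gaussian q x).differentiableAt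
  decay' k n := by
    obtain ⟨q, hq⟩ := exists_iteratedDeriv_eval_mul_gaussian p n
    obtain ⟨C, hC⟩ := exists_norm_eval_mul_gaussian_le (X ^ k * q)
    refine ⟨C, fun x ↦ ?_⟩
    rw [norm_iteratedFDeriv_eq_norm_iteratedDeriv, hq]
    simpa [mul_assoc] using hC x

lemma polyGaussian_apply (p : ℂ[X]) (x : ℝ) :
    polyGaussian p x = p.eval (x : ℂ) * Complex.exp (-π * x ^ 2) := rfl

/-- The moment `∫ xᵃ exp(-πx²) dx` of the Gaussian. -/
def gaussianMoment (a : ℕ) : ℂ := ∫ x : ℝ, polyGaussian (X ^ a) x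

lemma gaussianMoment_zero : gaussianMoment 0 = 1 := by
  simp only [gaussianMoment, polyGaussian_apply, pow_zero, eval_one, one_mul]
  rw [integral_gaussian_complex (by simpa using Real.pi_pos), div_self (by simp), Complex.one_cpow]

lemma integrable_const_mul_polyGaussian (c : ℂ) (p : ℂ[X]) :
    MeasureTheory.Integrable fun x ↦ c * polyGaussian p x :=
  (polyGaussian p).integrable.const_mul c

/-- Integration by parts. -/
lemma two_pi_mul_gaussianMoment_succ (a : ℕ) :
    2 * π * gaussianMoment (a + 1) = a * gaussianMoment (a - 1) := by
  have hderiv (x : ℝ) : HasDerivAt (polyGaussian (X ^ a))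
      (a * polyGaussian (X ^ (a - 1)) x - 2 * π * polyGaussian (X ^ (a + 1)) x) x := by
    convert! hasDerivAt_eval_mul_gaussian (X ^ a) x using 1
    simp only [polyGaussian_apply, derivative_X_pow, eval_sub, eval_mul, eval_pow, eval_X, eval_C]
    ring
  have hint := MeasureTheory.integral_eq_zero_of_hasDerivAt_of_integrable hderiv
    ((integrable_const_mul_polyGaussian _ _).sub (integrable_const_mul_polyGaussian _ _))
    (polyGaussian _).integrable
  rw [MeasureTheory.integral_sub (integrable_const_mul_polyGaussian _ _)
    (integrable_const_mul_polyGaussian _ _), MeasureTheory.integral_const_mul,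
    MeasureTheory.integral_const_mul, sub_eq_zero] at hint
  exact hint.symm

end Gaussian

section Wick

variable {n : ℕ}

/-- The Gaussian moment `∫ x^d exp(-π|x|²) dx` over `ℝⁿ`, in product form. -/
def multiGaussianMoment (d : Fin n → ℕ) : ℂ := ∏ p, gaussianMoment (d p)

lemma multiGaussianMoment_zero : multiGaussianMoment (0 : Fin n → ℕ) = 1 := by
  simp [multiGaussianMoment, gaussianMoment_zero]

lemma two_pi_mul_multiGaussianMoment_add_single (d : Fin n → ℕ) (i : Fin n) :
    2 * π * multiGaussianMoment (d + Pi.single i 1) =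
      d i * multiGaussianMoment (d - Pi.single i 1) := by
  have hoff (e : Fin n → ℕ) (he : ∀ p ≠ i, e p = d p) :
      multiGaussianMoment e =
        gaussianMoment (e i) * ∏ p ∈ Finset.univ.erase i, gaussianMoment (d p) := by
    rw [multiGaussianMoment, ← Finset.mul_prod_erase _ _ (Finset.mem_univ i)]
    congr 1
    exact Finset.prod_congr rfl fun p hp ↦ by rw [he p (Finset.ne_of_mem_erase hp)]
  rw [hoff _ fun p hp ↦ by simp [hp], hoff _ fun p hp ↦ by simp [hp]]
  simp only [Pi.add_apply, Pi.sub_apply, Pi.single_eq_same]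
  rw [← mul_assoc, two_pi_mul_gaussianMoment_succ, mul_assoc]

lemma multiGaussianMoment_two (i j : Fin n) :
    multiGaussianMoment (Pi.single i 1 + Pi.single j 1) =
      (if i = j then 1 else 0) * (2 * π : ℂ)⁻¹ := by
  have hrec := two_pi_mul_multiGaussianMoment_add_single (Pi.single i 1) j
  have hpi : (2 * π : ℂ) ≠ 0 := by simp [Real.pi_ne_zero]
  rw [← div_eq_mul_inv, eq_div_iff hpi, mul_comm, hrec]
  obtain rfl | hij := eq_or_ne i j
  · simp [multiGaussianMoment_zero]
  · simp [hij, hij.symm]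

/-- Wick's formula: pair the last index with each of the other three. -/
lemma multiGaussianMoment_four (i j l m : Fin n) :
    multiGaussianMoment (Pi.single i 1 + Pi.single j 1 + Pi.single l 1 + Pi.single m 1) =
      ((if i = j then 1 else 0) * (if l = m then 1 else 0) +
        (if i = l then 1 else 0) * (if j = m then 1 else 0) +
        (if i = m then 1 else 0) * (if j = l then 1 else 0)) * (2 * π : ℂ)⁻¹ ^ 2 := by
  set d : Fin n → ℕ := Pi.single i 1 + Pi.single j 1 + Pi.single l 1 with hd
  have hrec := two_pi_mul_multiGaussianMoment_add_single d m
  have hpi : (2 * π : ℂ) ≠ 0 := by simp [Real.pi_ne_zero]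
  have hdm : (d m : ℂ) = (if i = m then 1 else 0) + (if j = m then 1 else 0) +
      (if l = m then 1 else 0) := by
    simp [hd, Pi.single_apply, eq_comm]
  have hcontract (e : Fin n → ℕ) (p : Fin n) (he : d = e + Pi.single p 1) :
      (if p = m then 1 else 0) * multiGaussianMoment (d - Pi.single m 1) =
        (if p = m then 1 else 0) * multiGaussianMoment e := by
    split_ifs with hpm
    · rw [he, hpm, add_tsub_cancel_right]
    · simp only [zero_mul]
  rw [hdm, add_mul, add_mul, hcontract (Pi.single j 1 + Pi.single l 1) i (by rw [hd]; abel),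
    hcontract (Pi.single i 1 + Pi.single l 1) j (by rw [hd]; abel), hcontract _ l hd] at hrec
  simp only [multiGaussianMoment_two] at hrec
  rw [pow_two, ← mul_assoc, ← div_eq_mul_inv, eq_div_iff hpi]
  linear_combination hrec

end Wick

section Monomial

variable {n : ℕ}

/-- `f` is the family of terms of a Dirichlet-type series that converges for `0 < re s`, continues
holomorphically to `ℂ ∖ {0}` and has residue `c` at its (at most) simple pole `s = 0`. -/
def HasResidueAtZero {ι : Type*} (f : ι → ℂ → ℂ) (c : ℂ) : Prop :=
  ∃ g : ℂ → ℂ, DifferentiableOn ℂ g {s | s ≠ 0} ∧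
    (∀ s : ℂ, 0 < s.re → HasSum (fun k ↦ f k s) (g s)) ∧
    Tendsto (fun s ↦ s * g s) (𝓝[≠] 0) (𝓝 c)

/-- The terms of the series `∑' k^d / |k|^(s + n + |d|)` over `ℤⁿ ∖ {0}`, where
`k^d = ∏ᵢ kᵢ^dᵢ`. -/
def monomialTerm (d : Fin n → ℕ) (k : Fin n → ℤ) (s : ℂ) : ℂ :=
  if k = 0 then 0 else
    (∏ i, (k i : ℂ) ^ d i) / (znorm k : ℂ) ^ (s + n + (∑ i, d i : ℕ))

/-- The functional equation of the theta series of the polynomial `x^d`. -/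
def monomialThetaPair (hn : 0 < n) (d : Fin n → ℕ) : WeakFEPair ℂ :=
  schwartzThetaPair hn fun i ↦ polyGaussian (X ^ d i)

lemma monomialThetaPair_f₀ (hn : 0 < n) {d : Fin n → ℕ} (hd : d ≠ 0) :
    (monomialThetaPair hn d).f₀ = 0 := by
  obtain ⟨i, hi⟩ := Function.ne_iff.1 hd
  rw [Pi.zero_apply] at hi
  exact Finset.prod_eq_zero (Finset.mem_univ i) (by simp [polyGaussian_apply, hi])

lemma monomialThetaPair_g₀ (hn : 0 < n) (d : Fin n → ℕ) :
    (monomialThetaPair hn d).g₀ = multiGaussianMoment d := by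
  simp [monomialThetaPair, schwartzThetaPair, SchwartzMap.fourier_coe, Real.fourier_real_eq,
    multiGaussianMoment, gaussianMoment]

lemma prod_polyGaussian (d : Fin n → ℕ) (k : Fin n → ℤ) {t : ℝ} (ht : 0 < t) :
    ∏ i, polyGaussian (X ^ d i) (k i * √t) =
      (t : ℂ) ^ ((∑ i, d i : ℕ) / 2 : ℂ) *
        ((∏ i, (k i : ℂ) ^ d i) * rexp (-π * znorm k ^ 2 * t)) := by
  have hsqrt : (√t : ℂ) ^ (∑ i, d i) = (t : ℂ) ^ ((∑ i, d i : ℕ) / 2 : ℂ) := by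
    rw [Real.sqrt_eq_rpow, Complex.ofReal_cpow ht.le, ← Complex.cpow_mul_nat]
    congr 1
    push_cast
    ring
  have hexp : ∏ i, Complex.exp (-π * ((k i * √t : ℝ) : ℂ) ^ 2) = rexp (-π * znorm k ^ 2 * t) := by
    have hsq : (√t : ℂ) ^ 2 = t := by exact_mod_cast Real.sq_sqrt ht.le
    rw [← Complex.exp_sum, Complex.ofReal_exp, znorm_sq]
    push_cast
    simp only [mul_pow, hsq, Finset.mul_sum, Finset.sum_mul, mul_assoc]
  simp only [polyGaussian_apply, Finset.prod_mul_distrib, hexp]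
  simp only [eval_pow, eval_X, Complex.ofReal_mul, Complex.ofReal_intCast, mul_pow,
    Finset.prod_mul_distrib, Finset.prod_pow_eq_pow_sum, hsqrt]
  ring

lemma hasSum_monomialThetaPair (hn : 0 < n) {d : Fin n → ℕ} (hd : d ≠ 0) {t : ℝ} (ht : 0 < t) :
    HasSum (fun k : Fin n → ℤ ↦ if znorm k = 0 then 0 else
        (∏ i, (k i : ℂ) ^ d i) * rexp (-π * znorm k ^ 2 * t))
      ((t : ℂ) ^ (-((∑ i, d i : ℕ) / 2) : ℂ) • (monomialThetaPair hn d).f t) := by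
  convert! (hasSum_schwartzThetaPair hn (fun i ↦ polyGaussian (X ^ d i)) ht).mul_left _ using 2
    with k
  have ht_ne : (t : ℂ) ≠ 0 := by exact_mod_cast ht.ne'
  rw [prod_polyGaussian d k ht, ← mul_assoc, ← Complex.cpow_add _ _ ht_ne, neg_add_cancel,
    Complex.cpow_zero, one_mul]
  split_ifs with hk
  · obtain ⟨i, hi⟩ := Function.ne_iff.1 hd
    rw [Pi.zero_apply] at hi
    rw [Finset.prod_eq_zero (Finset.mem_univ i) (by simp [znorm_eq_zero.1 hk, hi]), zero_mul]
  · rfl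

lemma norm_prod_pow_le_znorm_pow (d : Fin n → ℕ) (k : Fin n → ℤ) :
    ‖∏ i, (k i : ℂ) ^ d i‖ ≤ znorm k ^ ∑ i, d i := by
  rw [norm_prod, ← Finset.prod_pow_eq_pow_sum]
  refine Finset.prod_le_prod (fun _ _ ↦ norm_nonneg _) fun i _ ↦ ?_
  rw [norm_pow, Complex.norm_intCast]
  exact pow_le_pow_left₀ (abs_nonneg _) (abs_le_znorm k i) _

lemma summable_norm_prod_pow_div (d : Fin n → ℕ) {σ : ℝ} (hσ : 0 < σ) :
    Summable fun k : Fin n → ℤ ↦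
      ‖∏ i, (k i : ℂ) ^ d i‖ / |znorm k| ^ (σ + n + (∑ i, d i : ℕ)) := by
  refine (summable_znorm_rpow (r := -(σ + n)) (by linarith)).of_nonneg_of_le
    (fun k ↦ by positivity) fun k ↦ ?_
  rcases (znorm_nonneg k).eq_or_lt with hk | hk
  · have hexp : σ + n + (∑ i, d i : ℕ) ≠ 0 := by positivity
    rw [← hk, abs_zero, Real.zero_rpow hexp, div_zero]
    positivity
  · rw [abs_of_pos hk, div_le_iff₀ (by positivity), ← Real.rpow_add hk, neg_add_cancel_left,
      Real.rpow_natCast]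
    exact norm_prod_pow_le_znorm_pow d k

lemma hasSum_monomialTerm (hn : 0 < n) {d : Fin n → ℕ} (hd : d ≠ 0) {s : ℂ} (hs : 0 < s.re) :
    HasSum (fun k ↦ monomialTerm d k s)
      ((monomialThetaPair hn d).Λ ((s + n) / 2) *
        (Complex.Gammaℝ (s + n + (∑ i, d i : ℕ)))⁻¹) := by
  set w := s + n + (∑ i, d i : ℕ) with hw
  have hw_re : w.re = s.re + n + (∑ i, d i : ℕ) := by
    simp only [hw, Complex.add_re, Complex.natCast_re]
  have hw_pos : 0 < w.re := by rw [hw_re]; positivity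
  have hmellin := hasSum_mellin_pi_mul_sq hw_pos (fun t ht ↦ hasSum_monomialThetaPair hn hd ht)
    (by simpa only [hw_re] using summable_norm_prod_pow_div d hs)
  have hk : (monomialThetaPair hn d).k < ((s + n) / 2).re := by
    change (n : ℝ) / 2 < _
    rw [Complex.div_ofNat_re, Complex.add_re, Complex.natCast_re]
    gcongr
    linarith
  have hΛ := ((monomialThetaPair hn d).hasMellin hk).2
  simp only [monomialThetaPair_f₀ hn hd, sub_zero] at hΛ
  rw [mellin_cpow_smul, show w / 2 + -((∑ i, d i : ℕ) / 2) = (s + n) / 2 by rw [hw]; ring, hΛ]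
    at hmellin
  convert! hmellin.mul_right (Complex.Gammaℝ w)⁻¹ using 2 with k
  have hΓ : Complex.Gammaℝ w ≠ 0 := Complex.Gammaℝ_ne_zero_of_re_pos hw_pos
  rw [monomialTerm, ← hw, abs_of_nonneg (znorm_nonneg k)]
  split_ifs with hk
  · have hw_ne : w ≠ 0 := fun h ↦ hw_pos.ne' (by rw [h, Complex.zero_re])
    rw [znorm_eq_zero.2 hk, Complex.ofReal_zero, Complex.zero_cpow hw_ne, div_zero, zero_mul]
  · field_simp

theorem hasResidueAtZero_monomialTerm {d : Fin n → ℕ} (hd : d ≠ 0) :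
    HasResidueAtZero (monomialTerm d)
      (2 * multiGaussianMoment d / Complex.Gammaℝ (n + (∑ i, d i : ℕ))) := by
  have hn : 0 < n := Fin.pos (Function.ne_iff.1 hd).choose
  set P := monomialThetaPair hn d
  have hPk : (P.k : ℂ) = n / 2 := by simp [P, monomialThetaPair, schwartzThetaPair]
  have hz (s : ℂ) : (s + n) / 2 - P.k = s / 2 := by rw [hPk]; ring
  have hΓ : Differentiable ℂ fun s ↦ (Complex.Gammaℝ (s + n + (∑ i, d i : ℕ)))⁻¹ :=
    Complex.differentiable_Gammaℝ_inv.comp (by fun_prop)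
  refine ⟨fun s ↦ P.Λ ((s + n) / 2) * (Complex.Gammaℝ (s + n + (∑ i, d i : ℕ)))⁻¹,
    fun s hs ↦ ?_, fun s hs ↦ hasSum_monomialTerm hn hd hs, ?_⟩
  · have hne : (s + n) / 2 ≠ P.k := by
      rw [ne_eq, ← sub_eq_zero, hz]
      exact div_ne_zero hs two_ne_zero
    have hΛ : DifferentiableAt ℂ P.Λ ((s + n) / 2) :=
      P.differentiableAt_Λ (.inr (monomialThetaPair_f₀ hn hd)) (.inl hne)
    exact ((hΛ.fun_comp' s (by fun_prop)).mul (hΓ s)).differentiableWithinAt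
  · have hshift : Tendsto (fun s : ℂ ↦ (s + n) / 2) (𝓝[≠] 0) (𝓝[≠] (P.k : ℂ)) := by
      refine tendsto_nhdsWithin_of_tendsto_nhds_of_eventually_within _ ?_ ?_
      · exact (Continuous.tendsto' (by fun_prop) _ _ (by simp [hPk])).mono_left nhdsWithin_le_nhds
      · filter_upwards [self_mem_nhdsWithin] with s hs
        rw [mem_compl_singleton_iff, ne_eq, ← sub_eq_zero, hz]
        exact div_ne_zero hs two_ne_zero
    have hres := (P.Λ_residue_k.comp hshift).const_mul 2
    have hΓ_lim := (hΓ.continuous.tendsto 0).mono_left (nhdsWithin_le_nhds (s := {0}ᶜ))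
    convert! hres.mul hΓ_lim using 2 with s
    · simp only [Function.comp_apply, hz, smul_eq_mul]
      ring
    · rw [← monomialThetaPair_g₀ hn d, show P.ε = 1 from rfl, one_smul, zero_add, div_eq_mul_inv]

end Monomial

section SpecialResidues

variable {n : ℕ}

lemma prod_pow_single {ι R : Type*} [Fintype ι] [DecidableEq ι] [CommMonoid R] (x : ι → R)
    (i : ι) : ∏ p, x p ^ (Pi.single i 1 : ι → ℕ) p = x i := by
  simp [Pi.single_apply, pow_ite]

lemma prod_pow_add_single {ι R : Type*} [Fintype ι] [DecidableEq ι] [CommMonoid R] (x : ι → R)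
    (d : ι → ℕ) (i : ι) :
    ∏ p, x p ^ (d + Pi.single i 1 : ι → ℕ) p = (∏ p, x p ^ d p) * x i := by
  simp only [Pi.add_apply, pow_add, Finset.prod_mul_distrib, prod_pow_single]

lemma two_pi_inv_pow_div_Gammaℝ (z : ℂ) (m : ℕ) :
    (2 * π : ℂ)⁻¹ ^ m / Complex.Gammaℝ (z + 2 * m) =
      π ^ (z / 2) / (2 ^ m * Complex.Gamma (z / 2 + m)) := by
  have hpi : (π : ℂ) ≠ 0 := by exact_mod_cast Real.pi_ne_zero
  have hexp : -(z + 2 * m) / 2 = -(z / 2) - m := by ring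
  have harg : (z + 2 * m) / 2 = z / 2 + m := by ring
  rw [Complex.Gammaℝ_def, hexp, harg, Complex.cpow_sub _ _ hpi, Complex.cpow_neg,
    Complex.cpow_natCast, inv_pow, mul_pow]
  have hcpow : (π : ℂ) ^ (z / 2) ≠ 0 := by simp [Complex.cpow_eq_zero_iff, hpi]
  field_simp

theorem hasResidueAtZero_quadratic (i j : Fin n) :
    HasResidueAtZero
      (fun (k : Fin n → ℤ) s ↦
        if k = 0 then 0 else (k i * k j : ℂ) / (znorm k : ℂ) ^ (s + n + 2))
      ((if i = j then 1 else 0) * (π ^ (n / 2 : ℂ) / Complex.Gamma (n / 2 + 1))) := by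
  have hd : Pi.single i 1 + Pi.single j 1 ≠ (0 : Fin n → ℕ) := fun h ↦ by
    simpa using congrFun h i
  have hdeg : ∑ p, (Pi.single i 1 + Pi.single j 1 : Fin n → ℕ) p = 2 := by
    simp [Finset.sum_add_distrib]
  have hΓ := two_pi_inv_pow_div_Gammaℝ n 1
  have hres := hasResidueAtZero_monomialTerm hd
  simp only [Nat.cast_one, mul_one, pow_one] at hΓ
  rw [hdeg, multiGaussianMoment_two, Nat.cast_ofNat, mul_left_comm, mul_div_assoc, mul_div_assoc,
    hΓ] at hres
  convert! hres using 1
  · funext k s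
    simp only [monomialTerm, hdeg, prod_pow_add_single, prod_pow_single, Nat.cast_ofNat]
  · field_simp

theorem hasResidueAtZero_quartic (i j l m : Fin n) :
    HasResidueAtZero
      (fun (k : Fin n → ℤ) s ↦
        if k = 0 then 0 else (k i * k j * k l * k m : ℂ) / (znorm k : ℂ) ^ (s + n + 4))
      (((if i = j then 1 else 0) * (if l = m then 1 else 0) +
        (if i = l then 1 else 0) * (if j = m then 1 else 0) +
        (if i = m then 1 else 0) * (if j = l then 1 else 0)) *
        (π ^ (n / 2 : ℂ) / (2 * Complex.Gamma (n / 2 + 2)))) := by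
  have hd : Pi.single i 1 + Pi.single j 1 + Pi.single l 1 + Pi.single m 1 ≠ (0 : Fin n → ℕ) :=
    fun h ↦ by simpa using congrFun h i
  have hdeg : ∑ p, (Pi.single i 1 + Pi.single j 1 + Pi.single l 1 + Pi.single m 1 :
      Fin n → ℕ) p = 4 := by
    simp [Finset.sum_add_distrib]
  have hΓ := two_pi_inv_pow_div_Gammaℝ n 2
  have hres := hasResidueAtZero_monomialTerm hd
  norm_num only at hΓ
  rw [hdeg, multiGaussianMoment_four, Nat.cast_ofNat, mul_left_comm, mul_div_assoc, mul_div_assoc,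
    hΓ] at hres
  convert! hres using 1
  · funext k s
    simp only [monomialTerm, hdeg, prod_pow_add_single, prod_pow_single, Nat.cast_ofNat]
  · field_simp
    norm_num

end SpecialResidues

theorem special_residues_general (n : ℕ) :
    (∀ i j : Fin n, HasResidueAtZero
      (fun (k : Fin n → ℤ) s ↦
        if k = 0 then 0 else (k i * k j : ℂ) / (znorm k : ℂ) ^ (s + n + 2))
      ((if i = j then 1 else 0) * (π ^ (n / 2 : ℂ) / Complex.Gamma (n / 2 + 1)))) ∧
    (∀ i j l m : Fin n, HasResidueAtZero
      (fun (k : Fin n → ℤ) s ↦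
        if k = 0 then 0 else (k i * k j * k l * k m : ℂ) / (znorm k : ℂ) ^ (s + n + 4))
      (((if i = j then 1 else 0) * (if l = m then 1 else 0) +
        (if i = l then 1 else 0) * (if j = m then 1 else 0) +
        (if i = m then 1 else 0) * (if j = l then 1 else 0)) *
        (π ^ (n / 2 : ℂ) / (2 * Complex.Gamma (n / 2 + 2))))) :=
  ⟨hasResidueAtZero_quadratic, hasResidueAtZero_quartic⟩

end

/-- **Proposition (special residues).**
For `n = 2`: `Res_{s=0} Σ'_{k∈ℤ²} k_i k_j/|k|^{s+4} = δ_{ij} π`.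
For `n = 4`: `Res_{s=0} Σ'_{k∈ℤ⁴} k_i k_j/|k|^{s+6} = δ_{ij} π²/2` and
`Res_{s=0} Σ'_{k∈ℤ⁴} k_i k_j k_l k_m/|k|^{s+8}
  = (δ_{ij}δ_{lm} + δ_{il}δ_{jm} + δ_{im}δ_{jl}) π²/12`.
In each case the series converges for `Re s > 0` and the residue is that of the
meromorphic continuation at `s = 0`. -/
theorem special_residues :
    (∀ i j : Fin 2, ∃ g : ℂ → ℂ,
      DifferentiableOn ℂ g {s : ℂ | s ≠ 0} ∧
      (∀ s : ℂ, 0 < s.re →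
        HasSum (fun k : Fin 2 → ℤ =>
          if k = 0 then 0 else ((k i : ℂ) * (k j : ℂ)) / ((znorm k : ℂ) ^ (s + 4))) (g s)) ∧
      Tendsto (fun s => s * g s) (𝓝[≠] (0 : ℂ))
        (𝓝 (if i = j then ((Real.pi : ℝ) : ℂ) else 0))) ∧
    (∀ i j : Fin 4, ∃ g : ℂ → ℂ,
      DifferentiableOn ℂ g {s : ℂ | s ≠ 0} ∧
      (∀ s : ℂ, 0 < s.re →
        HasSum (fun k : Fin 4 → ℤ =>
          if k = 0 then 0 else ((k i : ℂ) * (k j : ℂ)) / ((znorm k : ℂ) ^ (s + 6))) (g s)) ∧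
      Tendsto (fun s => s * g s) (𝓝[≠] (0 : ℂ))
        (𝓝 (if i = j then ((Real.pi ^ 2 / 2 : ℝ) : ℂ) else 0))) ∧
    (∀ i j l m : Fin 4, ∃ g : ℂ → ℂ,
      DifferentiableOn ℂ g {s : ℂ | s ≠ 0} ∧
      (∀ s : ℂ, 0 < s.re →
        HasSum (fun k : Fin 4 → ℤ =>
          if k = 0 then 0 else
            ((k i : ℂ) * (k j : ℂ) * (k l : ℂ) * (k m : ℂ)) / ((znorm k : ℂ) ^ (s + 8)))
          (g s)) ∧
      Tendsto (fun s => s * g s) (𝓝[≠] (0 : ℂ))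
        (𝓝 (((if i = j then 1 else 0) * (if l = m then 1 else 0) +
              (if i = l then 1 else 0) * (if j = m then 1 else 0) +
              (if i = m then 1 else 0) * (if j = l then 1 else 0) : ℂ) *
            ((Real.pi ^ 2 / 12 : ℝ) : ℂ)))) := by
  have h₂ := (special_residues_general 2).1
  have h₄ := special_residues_general 4
  norm_num [HasResidueAtZero, add_assoc, Nat.factorial] at h₂ h₄ ⊢
  exact ⟨h₂, h₄⟩

end
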